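/- arXiv:0710.1969 — 3 statements merged into one kernel-verified Lean document; each statement's English description precedes it below -/
import Mathlib

section
/- On ℂ⁵ with coordinates (x₁,x₂,y₃,y₂,y₁), define the 1-forms ω₁(w)(v) = v_{y₃} − x₂v_{x₁} + x₁v_{x₂}, ω₂(w)(v) = v_{y₂} − (3/2)x₁v_{y₃} + (3/2)y₃v_{x₁} − x₁²v_{x₂} + x₁x₂v_{x₁}, and ω₃(w)(v) = v_{y₁} + (3/2)x₂v_{y₃} − (3/2)y₃v_{x₂} + x₁x₂v_{x₂} − x₂²v_{x₁}. Then the exterior derivatives satisfy dω₂ = 3 ω₁ ∧ dx₁ and dω₃ = −3 ω₁ ∧ dx₂; explicitly, for every w ∈ ℂ⁵ and all constant vectors u, v ∈ ℂ⁵: (fderiv ω₂ w u)(v) − (fderiv ω₂ w v)(u) = 3(ω₁(w)(u)·v_{x₁} − ω₁(w)(v)·u_{x₁}) and (fderiv ω₃ w u)(v) − (fderiv ω₃ w v)(u) = −3(ω₁(w)(u)·v_{x₂} − ω₁(w)(v)·u_{x₂}). -/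
/-!
With `η = dy - x₂ dx₁ + x₁ dx₂`, so that `dη = 2 dx₁ ∧ dx₂`, the form `ω₂` for `y = y₃` and `z = y₂`
is `dz - x₁ η + (3/2) y dx₁ - (1/2) x₁ dy`. The Leibniz rule gives
`dω₂ = η ∧ dx₁ + 2 (dy + x₁ dx₂) ∧ dx₁`, which is `3 η ∧ dx₁` because `dx₁ ∧ dx₁ = 0`.
Exchanging `x₁` and `x₂`, replacing `y` by `-y` and `y₂` by `y₁` turns `η` into `-η` and `ω₂` into
`ω₃`, so the second identity is an instance of the first.
-/

section OneForm

open ContinuousAlternatingMap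

variable {𝕜 E F : Type*} [NontriviallyNormedField 𝕜]
  [NormedAddCommGroup E] [NormedSpace 𝕜 E] [NormedAddCommGroup F] [NormedSpace 𝕜 F]

variable (𝕜 E F) in
/-- The identification of linear maps `E →L[𝕜] F` with the alternating `1`-forms that Mathlib's
`extDeriv` acts on. -/
noncomputable def oneFormEquiv : (E →L[𝕜] F) ≃L[𝕜] E [⋀^Fin 1]→L[𝕜] F :=
  (ofSubsingletonLIE (0 : Fin 1)).toContinuousLinearEquiv

/-- The alternating form `(u, v) ↦ A u v - A v u` obtained from a bilinear map `A`. Both `wedge` and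
`extDerivOneForm` are of this shape. -/
noncomputable def antisymmetrize (A : E →L[𝕜] E →L[𝕜] F) : E [⋀^Fin 2]→L[𝕜] F :=
  .alternatizeUncurryFin (oneFormEquiv 𝕜 E F ∘L A)

theorem antisymmetrize_apply (A : E →L[𝕜] E →L[𝕜] F) (v : Fin 2 → E) :
    antisymmetrize A v = A (v 0) (v 1) - A (v 1) (v 0) := by
  simp [antisymmetrize, oneFormEquiv, alternatizeUncurryFin_apply, Fin.removeNth, sub_eq_add_neg]

/-- The wedge product `α ∧ β` of two linear functionals, normalized so that
`(α ∧ β)(u, v) = α u • β v - α v • β u`; the second one may be vector-valued. -/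
noncomputable def wedge (α : E →L[𝕜] 𝕜) (β : E →L[𝕜] F) : E [⋀^Fin 2]→L[𝕜] F :=
  antisymmetrize (α.smulRight β)

theorem wedge_apply (α : E →L[𝕜] 𝕜) (β : E →L[𝕜] F) (v : Fin 2 → E) :
    wedge α β v = α (v 0) • β (v 1) - α (v 1) • β (v 0) :=
  antisymmetrize_apply _ v

/-- The exterior derivative of an `F`-valued 1-form `ω : E → E →L[𝕜] F`, obtained from Mathlib's
`extDeriv` through `oneFormEquiv`. -/
noncomputable def extDerivOneForm (ω : E → E →L[𝕜] F) (w : E) : E [⋀^Fin 2]→L[𝕜] F :=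
  extDeriv (fun x ↦ oneFormEquiv 𝕜 E F (ω x)) w

theorem extDerivOneForm_eq_antisymmetrize (ω : E → E →L[𝕜] F) (w : E) :
    extDerivOneForm ω w = antisymmetrize (fderiv 𝕜 ω w) :=
  congrArg alternatizeUncurryFin (oneFormEquiv 𝕜 E F).comp_fderiv

theorem extDerivOneForm_apply (ω : E → E →L[𝕜] F) (w : E) (v : Fin 2 → E) :
    extDerivOneForm ω w v = fderiv 𝕜 ω w (v 0) (v 1) - fderiv 𝕜 ω w (v 1) (v 0) := by
  rw [extDerivOneForm_eq_antisymmetrize, antisymmetrize_apply]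

variable {ω η : E → E →L[𝕜] F} {f : E → 𝕜} {w : E}

theorem extDerivOneForm_fun_add (hω : DifferentiableAt 𝕜 ω w) (hη : DifferentiableAt 𝕜 η w) :
    extDerivOneForm (fun x ↦ ω x + η x) w = extDerivOneForm ω w + extDerivOneForm η w := by
  ext v
  simp [extDerivOneForm_apply, fderiv_fun_add hω hη, add_sub_add_comm]

theorem extDerivOneForm_fun_sub (hω : DifferentiableAt 𝕜 ω w) (hη : DifferentiableAt 𝕜 η w) :
    extDerivOneForm (fun x ↦ ω x - η x) w = extDerivOneForm ω w - extDerivOneForm η w := by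
  ext v
  simp [extDerivOneForm_apply, fderiv_fun_sub hω hη, sub_sub_sub_comm]

theorem extDerivOneForm_const (α : E →L[𝕜] F) (w : E) :
    extDerivOneForm (fun _ ↦ α) w = 0 := by
  ext v
  simp [extDerivOneForm_apply]

theorem extDerivOneForm_fun_smul (hf : DifferentiableAt 𝕜 f w) (hω : DifferentiableAt 𝕜 ω w) :
    extDerivOneForm (fun x ↦ f x • ω x) w =
      wedge (fderiv 𝕜 f w) (ω w) + f w • extDerivOneForm ω w := by
  ext v
  simp only [extDerivOneForm_apply, fderiv_fun_smul hf hω, wedge_apply,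
    ContinuousAlternatingMap.add_apply, ContinuousAlternatingMap.smul_apply,
    _root_.add_apply, _root_.smul_apply, ContinuousLinearMap.smulRight_apply]
  module

theorem extDerivOneForm_clm_smul_const (α : E →L[𝕜] 𝕜) (β : E →L[𝕜] F) (w : E) :
    extDerivOneForm (fun x ↦ α x • β) w = wedge α β := by
  simp [extDerivOneForm_fun_smul α.differentiableAt (differentiableAt_const β),
    extDerivOneForm_const]

end OneForm

section Twistor

variable {𝕜 E : Type*} [NontriviallyNormedField 𝕜] [NormedAddCommGroup E] [NormedSpace 𝕜 E]
  (x₁ x₂ y z : E →L[𝕜] 𝕜)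

/-- The contact form `dy - x₂ dx₁ + x₁ dx₂` of the Heisenberg group, for linear coordinates
`x₁, x₂, y` on any normed space. -/
def contactForm (w : E) : E →L[𝕜] 𝕜 := y - x₂ w • x₁ + x₁ w • x₂

/-- The twistor form `dz - (3/2) x₁ dy + (3/2) y dx₁ - x₁² dx₂ + x₁ x₂ dx₁`, with the contact form
`η` split off: `dz - x₁ η + (3/2) y dx₁ - (1/2) x₁ dy`. -/
noncomputable def twistorForm (w : E) : E →L[𝕜] 𝕜 :=
  z - x₁ w • contactForm x₁ x₂ y w + y w • (3 / 2 : 𝕜) • x₁ - x₁ w • (1 / 2 : 𝕜) • y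

theorem contactForm_swap_neg (w : E) : contactForm x₂ x₁ (-y) w = -contactForm x₁ x₂ y w := by
  simp only [contactForm]
  abel

theorem twistorForm_apply [NeZero (2 : 𝕜)] (w v : E) :
    twistorForm x₁ x₂ y z w v = z v - 3 / 2 * x₁ w * y v + 3 / 2 * y w * x₁ v
      - x₁ w ^ 2 * x₂ v + x₁ w * x₂ w * x₁ v := by
  simp only [twistorForm, contactForm, add_apply, sub_apply, smul_apply, smul_eq_mul]
  field_simp
  ring

@[fun_prop]
theorem differentiable_contactForm : Differentiable 𝕜 (contactForm x₁ x₂ y) := by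
  unfold contactForm
  fun_prop

theorem extDerivOneForm_contactForm (w : E) :
    extDerivOneForm (contactForm x₁ x₂ y) w = (2 : 𝕜) • wedge x₁ x₂ := by
  have leibniz : extDerivOneForm (contactForm x₁ x₂ y) w = -wedge x₂ x₁ + wedge x₁ x₂ := by
    unfold contactForm
    rw [extDerivOneForm_fun_add (by fun_prop) (by fun_prop),
      extDerivOneForm_fun_sub (by fun_prop) (by fun_prop), extDerivOneForm_const,
      zero_sub, extDerivOneForm_clm_smul_const, extDerivOneForm_clm_smul_const]
  rw [leibniz]
  ext v
  simp only [ContinuousAlternatingMap.add_apply, ContinuousAlternatingMap.neg_apply,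
    ContinuousAlternatingMap.smul_apply, wedge_apply, smul_eq_mul]
  ring

theorem extDerivOneForm_twistorForm [NeZero (2 : 𝕜)] (w : E) :
    extDerivOneForm (twistorForm x₁ x₂ y z) w = (3 : 𝕜) • wedge (contactForm x₁ x₂ y w) x₁ := by
  have leibniz : extDerivOneForm (twistorForm x₁ x₂ y z) w =
      -(wedge x₁ (contactForm x₁ x₂ y w) + x₁ w • (2 : 𝕜) • wedge x₁ x₂)
        + wedge y ((3 / 2 : 𝕜) • x₁) - wedge x₁ ((1 / 2 : 𝕜) • y) := by
    unfold twistorForm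
    rw [extDerivOneForm_fun_sub (by fun_prop) (by fun_prop),
      extDerivOneForm_fun_add (by fun_prop) (by fun_prop),
      extDerivOneForm_fun_sub (by fun_prop) (by fun_prop), extDerivOneForm_const,
      zero_sub, extDerivOneForm_fun_smul (by fun_prop) (by fun_prop), x₁.fderiv,
      extDerivOneForm_contactForm, extDerivOneForm_clm_smul_const, extDerivOneForm_clm_smul_const]
  rw [leibniz]
  ext v
  simp only [ContinuousAlternatingMap.sub_apply, ContinuousAlternatingMap.add_apply,
    ContinuousAlternatingMap.neg_apply, ContinuousAlternatingMap.smul_apply, wedge_apply,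
    contactForm, smul_eq_mul, add_apply, sub_apply, smul_apply]
  field_simp
  ring

theorem fderiv_twistorForm_sub_swap [NeZero (2 : 𝕜)] (w u v : E) :
    fderiv 𝕜 (twistorForm x₁ x₂ y z) w u v - fderiv 𝕜 (twistorForm x₁ x₂ y z) w v u =
      3 * (contactForm x₁ x₂ y w u * x₁ v - contactForm x₁ x₂ y w v * x₁ u) := by
  have apply_pair := congrArg (· ![u, v]) (extDerivOneForm_twistorForm x₁ x₂ y z w)
  simpa [extDerivOneForm_apply, wedge_apply] using apply_pair

end Twistor

theorem stmt2_general {𝕜 E : Type*} [NontriviallyNormedField 𝕜] [NeZero (2 : 𝕜)]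
    [NormedAddCommGroup E] [NormedSpace 𝕜 E] (x₁ x₂ y₃ y₂ y₁ : E →L[𝕜] 𝕜)
    (ω₁ ω₂ ω₃ : E → E →L[𝕜] 𝕜)
    (hω₁ : ∀ w v, ω₁ w v = y₃ v - x₂ w * x₁ v + x₁ w * x₂ v)
    (hω₂ : ∀ w v, ω₂ w v = y₂ v - (3 / 2) * x₁ w * y₃ v + (3 / 2) * y₃ w * x₁ v
      - x₁ w ^ 2 * x₂ v + x₁ w * x₂ w * x₁ v)
    (hω₃ : ∀ w v, ω₃ w v = y₁ v + (3 / 2) * x₂ w * y₃ v - (3 / 2) * y₃ w * x₂ v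
      + x₁ w * x₂ w * x₂ v - x₂ w ^ 2 * x₁ v) (w u v : E) :
    fderiv 𝕜 ω₂ w u v - fderiv 𝕜 ω₂ w v u = 3 * (ω₁ w u * x₁ v - ω₁ w v * x₁ u) ∧
      fderiv 𝕜 ω₃ w u v - fderiv 𝕜 ω₃ w v u = -3 * (ω₁ w u * x₂ v - ω₁ w v * x₂ u) := by
  have h₁ : ω₁ = contactForm x₁ x₂ y₃ := by
    ext w v
    simp [hω₁, contactForm]
  have h₂ : ω₂ = twistorForm x₁ x₂ y₃ y₂ := by
    ext w v
    rw [hω₂, twistorForm_apply]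
  have h₃ : ω₃ = twistorForm x₂ x₁ (-y₃) y₁ := by
    ext w v
    rw [hω₃, twistorForm_apply]
    simp only [neg_apply]
    ring
  subst h₁ h₂ h₃
  refine ⟨fderiv_twistorForm_sub_swap x₁ x₂ y₃ y₂ w u v, ?_⟩
  rw [fderiv_twistorForm_sub_swap, contactForm_swap_neg]
  simp only [neg_apply]
  ring

/-- On `ℂ⁵` with coordinates `(x₁,x₂,y₃,y₂,y₁)` (indices `0,1,2,3,4`),
the exterior derivatives of the G₂ twistor 1-forms satisfy `dω₂ = 3 ω₁ ∧ dx₁` and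
`dω₃ = -3 ω₁ ∧ dx₂`, where `dω(w)(u,v) = (fderiv ω w u)(v) - (fderiv ω w v)(u)`. -/
theorem stmt2 (ω₁ ω₂ ω₃ : (Fin 5 → ℂ) → ((Fin 5 → ℂ) →L[ℂ] ℂ))
    (hω₁ : ∀ w v, ω₁ w v = v 2 - w 1 * v 0 + w 0 * v 1)
    (hω₂ : ∀ w v, ω₂ w v = v 3 - (3/2) * w 0 * v 2 + (3/2) * w 2 * v 0
      - w 0 ^ 2 * v 1 + w 0 * w 1 * v 0)
    (hω₃ : ∀ w v, ω₃ w v = v 4 + (3/2) * w 1 * v 2 - (3/2) * w 2 * v 1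
      + w 0 * w 1 * v 1 - w 1 ^ 2 * v 0) :
    ∀ w u v : Fin 5 → ℂ,
      (fderiv ℂ ω₂ w u) v - (fderiv ℂ ω₂ w v) u
        = 3 * (ω₁ w u * v 0 - ω₁ w v * u 0) ∧
      (fderiv ℂ ω₃ w u) v - (fderiv ℂ ω₃ w v) u
        = -3 * (ω₁ w u * v 1 - ω₁ w v * u 1) :=
  stmt2_general (.proj 0) (.proj 1) (.proj 2) (.proj 3) (.proj 4) ω₁ ω₂ ω₃ hω₁ hω₂ hω₃
end

section
/- On ℂ⁵ with coordinates (x₁,x₂,y₃,y₂,y₁), define ω₁(w)(v) = v_{y₃} − x₂v_{x₁} + x₁v_{x₂}, ω₂(w)(v) = v_{y₂} − (3/2)x₁v_{y₃} + (3/2)y₃v_{x₁} − x₁²v_{x₂} + x₁x₂v_{x₁}, ω₃(w)(v) = v_{y₁} + (3/2)x₂v_{y₃} − (3/2)y₃v_{x₂} + x₁x₂v_{x₂} − x₂²v_{x₁}. Let r = 3^(1/3) be the real cube root of 3 and define φ : ℂ⁵ → ℂ⁵ by φ(x₁,x₂,y₃,y₂,y₁) = (y₂ − (3/2)x₁y₃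 − x₁²x₂, y₁ − (3/2)x₂y₃ − x₁x₂², −(3/r)(y₃ + x₁x₂), −r·x₁, −r·x₂). Then φ is bijective, and for every w ∈ ℂ⁵ and v ∈ ℂ⁵: (ω₁(w)(v) = ω₂(w)(v) = ω₃(w)(v) = 0) if and only if, writing z = φ(w) and u = (fderiv φ w)(v), one has u₁ + z₃u₄ = 0, u₂ + z₅u₃ + z₅²u₄ = 0, and u₃ + 2z₅u₄ = 0. (This identifies the superhorizontal Pfaffian system of the twistor fibration G₂/U(2) → G₂/SO(4) with Cartan's model system S¹¹₅(z₅²) = {dz₁ + z₃dz₄, dz₂ + z₅dz₃ + z₅²dz₄, dz₃ + 2z₅dz₄}.) -/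
/-!
Pulling the three forms of Cartan's model system back along `φ` gives
`φ*(dz₁ + z₃dz₄) = ω₂`, `φ*(dz₂ + z₅dz₃ + z₅²dz₄) = ω₃` and
`φ*(dz₃ + 2z₅dz₄) = -(3/r) ω₁`, so the two systems have the same common zeros.
The map `φ` is bijective because it is triangular: `z₄`, `z₅` determine `x₁`, `x₂`, then `z₃`
determines `y₃`, and finally `z₁`, `z₂` determine `y₂`, `y₁`.
-/

section Bijectivity

variable {K : Type*} [Field K] {r : K}

/-- The change of coordinates `φ` from the superhorizontal system to Cartan's model system, with
the scale `r` left free. Points are written `(x₁, x₂, y₃, y₂, y₁)` in the source and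
`(z₁, z₂, z₃, z₄, z₅)` in the target, both indexed from `0`. -/
def toCartanModel (r : K) (w : Fin 5 → K) : Fin 5 → K :=
  ![w 3 - (3 / 2) * w 0 * w 2 - w 0 ^ 2 * w 1,
    w 4 - (3 / 2) * w 1 * w 2 - w 0 * w 1 ^ 2,
    -(3 / r) * (w 2 + w 0 * w 1), -r * w 0, -r * w 1]

/-- The inverse of the change of coordinates `toCartanModel r`; `a`, `b`, `c` are the recovered
values of `x₁`, `x₂`, `y₃`. -/
def ofCartanModel (r : K) (z : Fin 5 → K) : Fin 5 → K :=
  let a := -z 3 / r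
  let b := -z 4 / r
  let c := -(r / 3) * z 2 - a * b
  ![a, b, c, z 0 + (3 / 2) * a * c + a ^ 2 * b, z 1 + (3 / 2) * b * c + a * b ^ 2]

theorem leftInverse_ofCartanModel (h3 : (3 : K) ≠ 0) (hr : r ≠ 0) :
    Function.LeftInverse (ofCartanModel r) (toCartanModel r) := by
  intro w
  have hx (t : K) : -(-r * t) / r = t := by field_simp
  have hy : -(r / 3) * (-(3 / r) * (w 2 + w 0 * w 1)) - w 0 * w 1 = w 2 := by
    field_simp
    ring
  ext i
  fin_cases i <;> simp [toCartanModel, ofCartanModel, -neg_mul, hx, hy, sub_sub, add_assoc]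

theorem rightInverse_ofCartanModel (h3 : (3 : K) ≠ 0) (hr : r ≠ 0) :
    Function.RightInverse (ofCartanModel r) (toCartanModel r) := by
  intro z
  have hx (t : K) : -r * (-t / r) = t := by field_simp
  have hy (t : K) : -(3 / r) * (-(r / 3) * t) = t := by field_simp
  ext i
  fin_cases i <;> simp [toCartanModel, ofCartanModel, -neg_mul, hx, hy, sub_sub, add_assoc]

theorem toCartanModel_bijective (h3 : (3 : K) ≠ 0) (hr : r ≠ 0) :
    Function.Bijective (toCartanModel r) :=
  Function.bijective_iff_has_inverse.mpr
    ⟨ofCartanModel r, leftInverse_ofCartanModel h3 hr, rightInverse_ofCartanModel h3 hr⟩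

end Bijectivity

section Pullback

open ContinuousLinearMap

variable {𝕜 : Type*} [NontriviallyNormedField 𝕜] {r : 𝕜}

/-- The coordinate 1-form `dwᵢ` on `𝕜⁵`. -/
abbrev coordForm (i : Fin 5) : (Fin 5 → 𝕜) →L[𝕜] 𝕜 := proj i

/-- The form `ω₁ = dy₃ - x₂dx₁ + x₁dx₂` of the superhorizontal system. -/
def superhorizontalForm₁ (w : Fin 5 → 𝕜) : (Fin 5 → 𝕜) →L[𝕜] 𝕜 :=
  coordForm 2 - w 1 • coordForm 0 + w 0 • coordForm 1

/-- The form `ω₂ = dy₂ - (3/2)x₁dy₃ + (3 / 2)y₃dx₁ - x₁²dx₂ + x₁x₂dx₁` of the superhorizontal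
system. -/
def superhorizontalForm₂ (w : Fin 5 → 𝕜) : (Fin 5 → 𝕜) →L[𝕜] 𝕜 :=
  coordForm 3 - ((3 / 2) * w 0) • coordForm 2 + ((3 / 2) * w 2) • coordForm 0
    - w 0 ^ 2 • coordForm 1 + (w 0 * w 1) • coordForm 0

/-- The form `ω₃ = dy₁ + (3 / 2)x₂dy₃ - (3 / 2)y₃dx₂ + x₁x₂dx₂ - x₂²dx₁` of the superhorizontal
system. -/
def superhorizontalForm₃ (w : Fin 5 → 𝕜) : (Fin 5 → 𝕜) →L[𝕜] 𝕜 :=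
  coordForm 4 + ((3 / 2) * w 1) • coordForm 2 - ((3 / 2) * w 2) • coordForm 1
    + (w 0 * w 1) • coordForm 1 - w 1 ^ 2 • coordForm 0

/-- The form `dz₁ + z₃dz₄` of Cartan's model system. -/
def cartanForm₁ (z : Fin 5 → 𝕜) : (Fin 5 → 𝕜) →L[𝕜] 𝕜 :=
  coordForm 0 + z 2 • coordForm 3

/-- The form `dz₂ + z₅dz₃ + z₅²dz₄` of Cartan's model system. -/
def cartanForm₂ (z : Fin 5 → 𝕜) : (Fin 5 → 𝕜) →L[𝕜] 𝕜 :=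
  coordForm 1 + z 4 • coordForm 2 + z 4 ^ 2 • coordForm 3

/-- The form `dz₃ + 2z₅dz₄` of Cartan's model system. -/
def cartanForm₃ (z : Fin 5 → 𝕜) : (Fin 5 → 𝕜) →L[𝕜] 𝕜 :=
  coordForm 2 + (2 * z 4) • coordForm 3

/-- The differential of `toCartanModel r` at `w`, one component form per target coordinate. -/
def toCartanModelDeriv (r : 𝕜) (w : Fin 5 → 𝕜) : (Fin 5 → 𝕜) →L[𝕜] (Fin 5 → 𝕜) :=
  pi ![coordForm 3 - (3 / 2 : 𝕜) • (w 0 • coordForm 2 + w 2 • coordForm 0)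
      - (w 0 ^ 2 • coordForm 1 + (2 * w 0 * w 1) • coordForm 0),
    coordForm 4 - (3 / 2 : 𝕜) • (w 1 • coordForm 2 + w 2 • coordForm 1)
      - ((2 * w 0 * w 1) • coordForm 1 + w 1 ^ 2 • coordForm 0),
    -(3 / r) • (coordForm 2 + (w 0 • coordForm 1 + w 1 • coordForm 0)),
    -r • coordForm 0, -r • coordForm 1]

theorem hasFDerivAt_toCartanModel (r : 𝕜) (w : Fin 5 → 𝕜) :
    HasFDerivAt (toCartanModel r) (toCartanModelDeriv r w) w := by
  have hd (i : Fin 5) : HasFDerivAt (fun w : Fin 5 → 𝕜 => w i) (coordForm i) w :=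
    hasFDerivAt_apply i w
  refine hasFDerivAt_pi.mpr fun i => ?_
  fin_cases i
  · refine (((hd 3).sub (((hd 0).const_mul (3 / 2)).mul (hd 2))).sub
      (((hd 0).pow 2).mul (hd 1))).congr_fderiv ?_
    ext v
    simp only [pow_one, nsmul_eq_mul, Nat.cast_ofNat, Nat.add_one_sub_one, sub_apply, add_apply,
      smul_apply, proj_apply, smul_eq_mul, Fin.zero_eta, Matrix.cons_val]
    ring
  · refine (((hd 4).sub (((hd 1).const_mul (3 / 2)).mul (hd 2))).sub
      ((hd 0).mul ((hd 1).pow 2))).congr_fderiv ?_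
    ext v
    simp only [pow_one, nsmul_eq_mul, Nat.cast_ofNat, Nat.add_one_sub_one, sub_apply, add_apply,
      smul_apply, proj_apply, smul_eq_mul, Fin.mk_one, Matrix.cons_val]
    ring
  · exact ((hd 2).add ((hd 0).mul (hd 1))).const_mul (-(3 / r))
  · exact (hd 0).const_mul (-r)
  · exact (hd 1).const_mul (-r)

theorem cartanForm₁_comp_toCartanModelDeriv (h2 : (2 : 𝕜) ≠ 0) (hr : r ≠ 0) (w : Fin 5 → 𝕜) :
    cartanForm₁ (toCartanModel r w) ∘L toCartanModelDeriv r w = superhorizontalForm₂ w := by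
  have hhalf : (3 / 2 : 𝕜) * 2 = 3 := div_mul_cancel₀ 3 h2
  have hscale : 3 / r * r = 3 := div_mul_cancel₀ 3 hr
  ext1 v
  simp only [cartanForm₁, toCartanModel, toCartanModelDeriv, superhorizontalForm₂,
    comp_apply, add_apply, sub_apply, smul_apply, coe_pi', proj_apply,
    Matrix.cons_val, smul_eq_mul]
  linear_combination (w 2 + w 0 * w 1) * v 0 * hscale - w 2 * v 0 * hhalf

theorem cartanForm₂_comp_toCartanModelDeriv (h2 : (2 : 𝕜) ≠ 0) (hr : r ≠ 0) (hr3 : r ^ 3 = 3)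
    (w : Fin 5 → 𝕜) :
    cartanForm₂ (toCartanModel r w) ∘L toCartanModelDeriv r w = superhorizontalForm₃ w := by
  have hhalf : (3 / 2 : 𝕜) * 2 = 3 := div_mul_cancel₀ 3 h2
  have hscale : 3 / r * r = 3 := div_mul_cancel₀ 3 hr
  ext1 v
  simp only [cartanForm₂, toCartanModel, toCartanModelDeriv, superhorizontalForm₃,
    comp_apply, add_apply, sub_apply, smul_apply, coe_pi', proj_apply,
    Matrix.cons_val, smul_eq_mul]
  linear_combination w 1 * (v 2 + w 0 * v 1 + w 1 * v 0) * hscale - w 1 * v 2 * hhalf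
    - w 1 ^ 2 * v 0 * hr3

theorem cartanForm₃_comp_toCartanModelDeriv (hr : r ≠ 0) (hr3 : r ^ 3 = 3) (w : Fin 5 → 𝕜) :
    cartanForm₃ (toCartanModel r w) ∘L toCartanModelDeriv r w =
      -(3 / r) • superhorizontalForm₁ w := by
  have hsq : 3 / r = r ^ 2 := by rw [div_eq_iff hr, ← hr3, pow_succ]
  ext1 v
  simp only [cartanForm₃, toCartanModel, toCartanModelDeriv, superhorizontalForm₁,
    comp_apply, add_apply, sub_apply, smul_apply, coe_pi', proj_apply,
    Matrix.cons_val, smul_eq_mul]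
  linear_combination -2 * w 1 * v 0 * hsq

theorem stmt10_general (h2 : (2 : 𝕜) ≠ 0) (h3 : (3 : 𝕜) ≠ 0) (hr3 : r ^ 3 = 3) :
    Function.Bijective (toCartanModel r) ∧
    ∀ w v : Fin 5 → 𝕜,
      (superhorizontalForm₁ w v = 0 ∧ superhorizontalForm₂ w v = 0 ∧
        superhorizontalForm₃ w v = 0) ↔
      (cartanForm₁ (toCartanModel r w) (fderiv 𝕜 (toCartanModel r) w v) = 0 ∧
        cartanForm₂ (toCartanModel r w) (fderiv 𝕜 (toCartanModel r) w v) = 0 ∧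
        cartanForm₃ (toCartanModel r w) (fderiv 𝕜 (toCartanModel r) w v) = 0) := by
  have hr : r ≠ 0 := by
    rintro rfl
    exact h3 (by simpa using hr3.symm)
  have hscale : -(3 / r) ≠ 0 := neg_ne_zero.mpr (div_ne_zero h3 hr)
  refine ⟨toCartanModel_bijective h3 hr, fun w v => ?_⟩
  rw [(hasFDerivAt_toCartanModel r w).fderiv, ← comp_apply, ← comp_apply, ← comp_apply,
    cartanForm₁_comp_toCartanModelDeriv h2 hr, cartanForm₂_comp_toCartanModelDeriv h2 hr hr3,
    cartanForm₃_comp_toCartanModelDeriv hr hr3, smul_apply, smul_eq_zero_iff_right hscale]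
  tauto

end Pullback

/-- On `ℂ⁵` with coordinates `(x₁,x₂,y₃,y₂,y₁)` (indices `0,1,2,3,4`),
the superhorizontal Pfaffian system `{ω₁, ω₂, ω₃}` of the twistor fibration
`G₂/U(2) → G₂/SO(4)` is identified with Cartan's model system
`S¹¹₅(z₅²) = {dz₁ + z₃dz₄, dz₂ + z₅dz₃ + z₅²dz₄, dz₃ + 2z₅dz₄}` by the bijection
`φ(x₁,x₂,y₃,y₂,y₁) = (y₂ - (3/2)x₁y₃ - x₁²x₂, y₁ - (3/2)x₂y₃ - x₁x₂²,
-(3/r)(y₃ + x₁x₂), -r x₁, -r x₂)` with `r = 3^(1/3)`. -/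
theorem stmt10 (ω₁ ω₂ ω₃ : (Fin 5 → ℂ) → ((Fin 5 → ℂ) →L[ℂ] ℂ))
    (hω₁ : ∀ w v, ω₁ w v = v 2 - w 1 * v 0 + w 0 * v 1)
    (hω₂ : ∀ w v, ω₂ w v = v 3 - (3/2) * w 0 * v 2 + (3/2) * w 2 * v 0
      - w 0 ^ 2 * v 1 + w 0 * w 1 * v 0)
    (hω₃ : ∀ w v, ω₃ w v = v 4 + (3/2) * w 1 * v 2 - (3/2) * w 2 * v 1
      + w 0 * w 1 * v 1 - w 1 ^ 2 * v 0)
    (r : ℂ) (hr : r = ((3 : ℝ) ^ ((1 : ℝ)/3) : ℝ))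
    (φ : (Fin 5 → ℂ) → (Fin 5 → ℂ))
    (hφ : ∀ w, φ w = ![w 3 - (3/2) * w 0 * w 2 - w 0 ^ 2 * w 1,
      w 4 - (3/2) * w 1 * w 2 - w 0 * w 1 ^ 2,
      -(3 / r) * (w 2 + w 0 * w 1), -r * w 0, -r * w 1]) :
    Function.Bijective φ ∧
    ∀ w v : Fin 5 → ℂ,
      (ω₁ w v = 0 ∧ ω₂ w v = 0 ∧ ω₃ w v = 0) ↔
      ((fderiv ℂ φ w v) 0 + (φ w) 2 * (fderiv ℂ φ w v) 3 = 0 ∧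
       (fderiv ℂ φ w v) 1 + (φ w) 4 * (fderiv ℂ φ w v) 2
          + (φ w) 4 ^ 2 * (fderiv ℂ φ w v) 3 = 0 ∧
       (fderiv ℂ φ w v) 2 + 2 * (φ w) 4 * (fderiv ℂ φ w v) 3 = 0) := by
  obtain rfl : φ = toCartanModel r := funext hφ
  obtain rfl : ω₁ = superhorizontalForm₁ := funext fun w => ContinuousLinearMap.ext (hω₁ w)
  obtain rfl : ω₂ = superhorizontalForm₂ := funext fun w => ContinuousLinearMap.ext (hω₂ w)
  obtain rfl : ω₃ = superhorizontalForm₃ := funext fun w => ContinuousLinearMap.ext (hω₃ w)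
  have hr3 : r ^ 3 = 3 := by
    rw [hr, one_div]
    exact_mod_cast Real.rpow_inv_natCast_pow (n := 3) (zero_le_three (α := ℝ)) three_ne_zero
  exact stmt10_general two_ne_zero three_ne_zero hr3
end

section
/- On ℂ⁵ with coordinates (x₁,x₂,y₃,y₂,y₁), let ω₁(w)(v) = v_{y₃} − x₂v_{x₁} + x₁v_{x₂}, ω₂(w)(v) = v_{y₂} − (3/2)x₁v_{y₃} + (3/2)y₃v_{x₁} − x₁²v_{x₂} + x₁x₂v_{x₁}, ω₃(w)(v) = v_{y₁} + (3/2)x₂v_{y₃} − (3/2)y₃v_{x₂} + x₁x₂v_{x₂} − x₂²v_{x₁}, and let D_w = ker(ω₁(w)) ∩ ker(ω₂(w)) ∩ ker(ω₃(w)). Then: (a) for all differentiable vector fields X, Y : ℂ⁵ → ℂ⁵ valued in D, both ω₂(w)([X,Y](w)) = 0 and ω₃(w)([X,Y](w)) = 0 for all w; and (b) there exist differentiable vector fields X, Y valued in D with ω₁(w)([X,Y](w)) ≠ 0 for every w ∈ ℂ⁵. (Hence the derived system of the G₂ twistor Pfaffian system is {ω₂, ω₃}, of rank 2, and the original system is not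 completely integrable.) -/
/- The forms obey the structure equations `dω₁ = 2 dx₁ ∧ dx₂`, `dω₂ = -3 dx₁ ∧ ω₁` and
`dω₃ = 3 dx₂ ∧ ω₁`. By Cartan's formula, `ω([X, Y]) = -dω(X, Y)` whenever the form `ω` annihilates
the vector fields `X` and `Y`. Since `dω₂` and `dω₃` are multiples of `ω₁`, they vanish on pairs of
vectors of `D`, whereas `dω₁` takes the constant value `2` on the frame of `D` dual to
`dx₁`, `dx₂`. -/

open Filter Topology VectorField

section OneForm

variable {𝕜 E F : Type*} [NontriviallyNormedField 𝕜] [NormedAddCommGroup E] [NormedSpace 𝕜 E]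
  [NormedAddCommGroup F] [NormedSpace 𝕜 F]

/-- The differential form of degree one given by a field `ω` of continuous linear maps, in the
encoding by alternating maps for which `extDeriv` is defined. -/
def oneForm (ω : E → E →L[𝕜] F) (w : E) : E [⋀^Fin 1]→L[𝕜] F :=
  .ofSubsingleton 𝕜 E F 0 (ω w)

theorem oneForm_apply (ω : E → E →L[𝕜] F) (w : E) (v : Fin 1 → E) : oneForm ω w v = ω w (v 0) :=
  rfl

variable {ω : E → E →L[𝕜] F} {w : E}

theorem differentiableAt_oneForm (hω : DifferentiableAt 𝕜 ω w) :
    DifferentiableAt 𝕜 (oneForm ω) w :=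
  have hLIE := (ContinuousAlternatingMap.ofSubsingletonLIE
    (𝕜 := 𝕜) (E := E) (F := F) (0 : Fin 1)).differentiableAt (x := ω w)
  hLIE.comp w hω

theorem extDeriv_oneForm_apply (hω : DifferentiableAt 𝕜 ω w) (u v : E) :
    extDeriv (oneForm ω) w ![u, v] =
      fderiv 𝕜 (fun z => ω z v) w u - fderiv 𝕜 (fun z => ω z u) w v := by
  simp [extDeriv_apply (differentiableAt_oneForm hω), Fin.sum_univ_two, oneForm_apply,
    Fin.removeNth, sub_eq_add_neg]

theorem apply_lieBracket_eq_neg_extDeriv {X Y : E → E} (hω : DifferentiableAt 𝕜 ω w)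
    (hX : DifferentiableAt 𝕜 X w) (hY : DifferentiableAt 𝕜 Y w)
    (hωX : ∀ᶠ z in 𝓝 w, ω z (X z) = 0) (hωY : ∀ᶠ z in 𝓝 w, ω z (Y z) = 0) :
    ω w (lieBracket 𝕜 X Y w) = -extDeriv (oneForm ω) w ![X w, Y w] := by
  have cartan := extDeriv_apply_vectorField (V := ![X, Y]) (differentiableAt_oneForm hω)
    (by simp [Fin.forall_fin_two, hX, hY])
  have hdX : fderiv 𝕜 (fun z => ω z (X z)) w = 0 := by
    simpa using EventuallyEq.fderiv_eq (f := fun _ => (0 : F)) hωX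
  have hdY : fderiv 𝕜 (fun z => ω z (Y z)) w = 0 := by
    simpa using EventuallyEq.fderiv_eq (f := fun _ => (0 : F)) hωY
  have hV : (fun i => ![X, Y] i w) = ![X w, Y w] := by
    ext i; fin_cases i <;> rfl
  rw [hV] at cartan
  simp [cartan, Fin.sum_univ_two, oneForm_apply, Fin.removeNth, hdX, hdY]

end OneForm

theorem fderiv_coord {𝕜 ι : Type*} [NontriviallyNormedField 𝕜] [Finite ι] (w : ι → 𝕜) (i : ι) :
    fderiv 𝕜 (fun z : ι → 𝕜 => z i) w = .proj i := by
  cases nonempty_fintype ι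
  exact (hasFDerivAt_apply i w).fderiv

namespace G2Twistor

open ContinuousLinearMap

variable {𝕜 : Type*} [NontriviallyNormedField 𝕜]

/-- The Pfaffian form `ω₁ = dy₃ - x₂ dx₁ + x₁ dx₂`, in the coordinates
`w = (x₁, x₂, y₃, y₂, y₁)`. -/
def form₁ (w : Fin 5 → 𝕜) : (Fin 5 → 𝕜) →L[𝕜] 𝕜 :=
  proj 2 - w 1 • proj 0 + w 0 • proj 1

/-- The Pfaffian form
`ω₂ = dy₂ - (3 / 2) x₁ dy₃ + (3 / 2) y₃ dx₁ - x₁² dx₂ + x₁ x₂ dx₁`. -/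
def form₂ (w : Fin 5 → 𝕜) : (Fin 5 → 𝕜) →L[𝕜] 𝕜 :=
  proj 3 - (3 / 2 * w 0) • proj 2 + (3 / 2 * w 2) • proj 0 - w 0 ^ 2 • proj 1
    + (w 0 * w 1) • proj 0

/-- The Pfaffian form
`ω₃ = dy₁ + (3 / 2) x₂ dy₃ - (3 / 2) y₃ dx₂ + x₁ x₂ dx₂ - x₂² dx₁`. -/
def form₃ (w : Fin 5 → 𝕜) : (Fin 5 → 𝕜) →L[𝕜] 𝕜 :=
  proj 4 + (3 / 2 * w 1) • proj 2 - (3 / 2 * w 2) • proj 1 + (w 0 * w 1) • proj 1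
    - w 1 ^ 2 • proj 0

theorem form₁_apply (w v : Fin 5 → 𝕜) : form₁ w v = v 2 - w 1 * v 0 + w 0 * v 1 :=
  rfl

theorem form₂_apply (w v : Fin 5 → 𝕜) :
    form₂ w v = v 3 - (3 / 2) * w 0 * v 2 + (3 / 2) * w 2 * v 0 - w 0 ^ 2 * v 1
      + w 0 * w 1 * v 0 :=
  rfl

theorem form₃_apply (w v : Fin 5 → 𝕜) :
    form₃ w v = v 4 + (3 / 2) * w 1 * v 2 - (3 / 2) * w 2 * v 1 + w 0 * w 1 * v 1
      - w 1 ^ 2 * v 0 :=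
  rfl

theorem differentiable_form₁ : Differentiable 𝕜 (form₁ (𝕜 := 𝕜)) := by
  unfold form₁; fun_prop

theorem differentiable_form₂ : Differentiable 𝕜 (form₂ (𝕜 := 𝕜)) := by
  unfold form₂; fun_prop

theorem differentiable_form₃ : Differentiable 𝕜 (form₃ (𝕜 := 𝕜)) := by
  unfold form₃; fun_prop

theorem extDeriv_form₁ (w u v : Fin 5 → 𝕜) :
    extDeriv (oneForm form₁) w ![u, v] = 2 * (u 0 * v 1 - v 0 * u 1) := by
  rw [extDeriv_oneForm_apply differentiable_form₁.differentiableAt]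
  simp (disch := fun_prop) only [form₁_apply, fderiv_fun_add, fderiv_fun_sub,
    fderiv_fun_mul, fderiv_fun_const, fderiv_coord, add_apply, sub_apply, smul_apply,
    Pi.zero_apply, zero_apply, proj_apply, smul_eq_mul]
  ring

theorem extDeriv_form₂ [NeZero (2 : 𝕜)] (w u v : Fin 5 → 𝕜) :
    extDeriv (oneForm form₂) w ![u, v] = -3 * (u 0 * form₁ w v - v 0 * form₁ w u) := by
  rw [extDeriv_oneForm_apply differentiable_form₂.differentiableAt]
  simp (disch := fun_prop) only [form₁_apply, form₂_apply, fderiv_fun_add, fderiv_fun_sub,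
    fderiv_fun_mul, fderiv_fun_pow, fderiv_fun_const, fderiv_coord, add_apply, sub_apply,
    smul_apply, Pi.zero_apply, zero_apply, proj_apply, smul_eq_mul]
  linear_combination (v 0 * u 2 - u 0 * v 2) * add_halves (3 : 𝕜)

theorem extDeriv_form₃ [NeZero (2 : 𝕜)] (w u v : Fin 5 → 𝕜) :
    extDeriv (oneForm form₃) w ![u, v] = 3 * (u 1 * form₁ w v - v 1 * form₁ w u) := by
  rw [extDeriv_oneForm_apply differentiable_form₃.differentiableAt]
  simp (disch := fun_prop) only [form₁_apply, form₃_apply, fderiv_fun_add, fderiv_fun_sub,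
    fderiv_fun_mul, fderiv_fun_pow, fderiv_fun_const, fderiv_coord, add_apply, sub_apply,
    smul_apply, Pi.zero_apply, zero_apply, proj_apply, smul_eq_mul]
  linear_combination (u 1 * v 2 - v 1 * u 2) * add_halves (3 : 𝕜)

section LieBracket

variable {X Y : (Fin 5 → 𝕜) → (Fin 5 → 𝕜)} {w : Fin 5 → 𝕜}

theorem form₁_lieBracket (hX : DifferentiableAt 𝕜 X w) (hY : DifferentiableAt 𝕜 Y w)
    (hX₁ : ∀ᶠ z in 𝓝 w, form₁ z (X z) = 0) (hY₁ : ∀ᶠ z in 𝓝 w, form₁ z (Y z) = 0) :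
    form₁ w (lieBracket 𝕜 X Y w) = -2 * (X w 0 * Y w 1 - Y w 0 * X w 1) := by
  rw [apply_lieBracket_eq_neg_extDeriv differentiable_form₁.differentiableAt hX hY hX₁ hY₁,
    extDeriv_form₁, neg_mul]

variable [NeZero (2 : 𝕜)]

theorem form₂_lieBracket_eq_zero (hX : DifferentiableAt 𝕜 X w) (hY : DifferentiableAt 𝕜 Y w)
    (hX₁ : form₁ w (X w) = 0) (hY₁ : form₁ w (Y w) = 0)
    (hX₂ : ∀ᶠ z in 𝓝 w, form₂ z (X z) = 0) (hY₂ : ∀ᶠ z in 𝓝 w, form₂ z (Y z) = 0) :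
    form₂ w (lieBracket 𝕜 X Y w) = 0 := by
  simp [apply_lieBracket_eq_neg_extDeriv differentiable_form₂.differentiableAt hX hY hX₂ hY₂,
    extDeriv_form₂, hX₁, hY₁]

theorem form₃_lieBracket_eq_zero (hX : DifferentiableAt 𝕜 X w) (hY : DifferentiableAt 𝕜 Y w)
    (hX₁ : form₁ w (X w) = 0) (hY₁ : form₁ w (Y w) = 0)
    (hX₃ : ∀ᶠ z in 𝓝 w, form₃ z (X z) = 0) (hY₃ : ∀ᶠ z in 𝓝 w, form₃ z (Y z) = 0) :
    form₃ w (lieBracket 𝕜 X Y w) = 0 := by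
  simp [apply_lieBracket_eq_neg_extDeriv differentiable_form₃.differentiableAt hX hY hX₃ hY₃,
    extDeriv_form₃, hX₁, hY₁]

end LieBracket

/-- The distribution `D = ker ω₁ ∩ ker ω₂ ∩ ker ω₃` of the Pfaffian system, whose sections are the
vector fields being bracketed. -/
def distribution (w : Fin 5 → 𝕜) : Submodule 𝕜 (Fin 5 → 𝕜) :=
  (form₁ w).ker ⊓ (form₂ w).ker ⊓ (form₃ w).ker

theorem mem_distribution {w v : Fin 5 → 𝕜} :
    v ∈ distribution w ↔ form₁ w v = 0 ∧ form₂ w v = 0 ∧ form₃ w v = 0 := by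
  simp only [distribution, Submodule.mem_inf, LinearMap.mem_ker, coe_coe, and_assoc]

/-- The vector field valued in `D` whose `x₁`-component is `1` and whose `x₂`-component is `0`.
The other components are found by solving `ω₁ = ω₂ = ω₃ = 0` in turn. Its bracket with `frame₂` is
the one that leaves `D`. -/
def frame₁ (w : Fin 5 → 𝕜) : Fin 5 → 𝕜 :=
  ![1, 0, w 1, 3 / 2 * (w 0 * w 1 - w 2) - w 0 * w 1, w 1 ^ 2 - 3 / 2 * w 1 ^ 2]

/-- The vector field valued in `D` whose `x₁`-component is `0` and whose `x₂`-component is `1`.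
It completes `frame₁` to a frame of `D` dual to `dx₁`, `dx₂`. -/
def frame₂ (w : Fin 5 → 𝕜) : Fin 5 → 𝕜 :=
  ![0, 1, -w 0, w 0 ^ 2 - 3 / 2 * w 0 ^ 2, 3 / 2 * (w 0 * w 1 + w 2) - w 0 * w 1]

theorem differentiable_frame₁ : Differentiable 𝕜 (frame₁ (𝕜 := 𝕜)) := by
  refine differentiable_pi.2 fun i => ?_
  fin_cases i <;> simp only [frame₁, Fin.reduceFinMk, Matrix.cons_val] <;> fun_prop

theorem differentiable_frame₂ : Differentiable 𝕜 (frame₂ (𝕜 := 𝕜)) := by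
  refine differentiable_pi.2 fun i => ?_
  fin_cases i <;> simp only [frame₂, Fin.reduceFinMk, Matrix.cons_val] <;> fun_prop

theorem frame₁_mem_distribution (w : Fin 5 → 𝕜) : frame₁ w ∈ distribution w := by
  simp only [mem_distribution, form₁_apply, form₂_apply, form₃_apply, frame₁,
    Matrix.cons_val]
  refine ⟨?_, ?_, ?_⟩ <;> ring

theorem frame₂_mem_distribution (w : Fin 5 → 𝕜) : frame₂ w ∈ distribution w := by
  simp only [mem_distribution, form₁_apply, form₂_apply, form₃_apply, frame₂,
    Matrix.cons_val]
  refine ⟨?_, ?_, ?_⟩ <;> ring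

theorem form₁_lieBracket_frame (w : Fin 5 → 𝕜) :
    form₁ w (lieBracket 𝕜 frame₁ frame₂ w) = -2 := by
  rw [form₁_lieBracket differentiable_frame₁.differentiableAt
    differentiable_frame₂.differentiableAt
    (.of_forall fun z => (mem_distribution.1 (frame₁_mem_distribution z)).1)
    (.of_forall fun z => (mem_distribution.1 (frame₂_mem_distribution z)).1)]
  simp [frame₁, frame₂]

end G2Twistor

open G2Twistor in
theorem stmt11_general {𝕜 : Type*} [NontriviallyNormedField 𝕜] [NeZero (2 : 𝕜)]
    (ω₁ ω₂ ω₃ : (Fin 5 → 𝕜) → ((Fin 5 → 𝕜) →L[𝕜] 𝕜))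
    (hω₁ : ∀ w v, ω₁ w v = v 2 - w 1 * v 0 + w 0 * v 1)
    (hω₂ : ∀ w v, ω₂ w v = v 3 - (3 / 2) * w 0 * v 2 + (3 / 2) * w 2 * v 0
      - w 0 ^ 2 * v 1 + w 0 * w 1 * v 0)
    (hω₃ : ∀ w v, ω₃ w v = v 4 + (3 / 2) * w 1 * v 2 - (3 / 2) * w 2 * v 1
      + w 0 * w 1 * v 1 - w 1 ^ 2 * v 0) :
    (∀ (X Y : (Fin 5 → 𝕜) → (Fin 5 → 𝕜)) (w : Fin 5 → 𝕜),
      DifferentiableAt 𝕜 X w → DifferentiableAt 𝕜 Y w →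
      (∀ᶠ z in 𝓝 w, ω₁ z (X z) = 0 ∧ ω₂ z (X z) = 0 ∧ ω₃ z (X z) = 0) →
      (∀ᶠ z in 𝓝 w, ω₁ z (Y z) = 0 ∧ ω₂ z (Y z) = 0 ∧ ω₃ z (Y z) = 0) →
      ω₂ w (lieBracket 𝕜 X Y w) = 0 ∧ ω₃ w (lieBracket 𝕜 X Y w) = 0) ∧
    (∃ X Y : (Fin 5 → 𝕜) → (Fin 5 → 𝕜), Differentiable 𝕜 X ∧ Differentiable 𝕜 Y ∧
      (∀ w, ω₁ w (X w) = 0 ∧ ω₂ w (X w) = 0 ∧ ω₃ w (X w) = 0) ∧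
      (∀ w, ω₁ w (Y w) = 0 ∧ ω₂ w (Y w) = 0 ∧ ω₃ w (Y w) = 0) ∧
      ∀ w, ω₁ w (lieBracket 𝕜 X Y w) ≠ 0) := by
  obtain rfl : ω₁ = form₁ := funext fun w => ContinuousLinearMap.ext (hω₁ w)
  obtain rfl : ω₂ = form₂ := funext fun w => ContinuousLinearMap.ext (hω₂ w)
  obtain rfl : ω₃ = form₃ := funext fun w => ContinuousLinearMap.ext (hω₃ w)
  refine ⟨fun X Y w hX hY hDX hDY => ?_,
    frame₁, frame₂, differentiable_frame₁, differentiable_frame₂,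
    fun w => mem_distribution.1 (frame₁_mem_distribution w),
    fun w => mem_distribution.1 (frame₂_mem_distribution w), fun w => ?_⟩
  · obtain ⟨hX₁, hX₂, hX₃⟩ := by simpa only [eventually_and] using hDX
    obtain ⟨hY₁, hY₂, hY₃⟩ := by simpa only [eventually_and] using hDY
    exact ⟨form₂_lieBracket_eq_zero hX hY hX₁.self_of_nhds hY₁.self_of_nhds hX₂ hY₂,
      form₃_lieBracket_eq_zero hX hY hX₁.self_of_nhds hY₁.self_of_nhds hX₃ hY₃⟩
  · rw [form₁_lieBracket_frame]
    exact neg_ne_zero.2 two_ne_zero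

/-- For the G₂ twistor Pfaffian system `{ω₁, ω₂, ω₃}` on `ℂ⁵` with
distribution `D = ker ω₁ ∩ ker ω₂ ∩ ker ω₃`: (a) brackets of differentiable vector
fields valued in `D` are annihilated by both `ω₂` and `ω₃`; (b) some pair of
differentiable vector fields valued in `D` has bracket on which `ω₁` never vanishes.
Hence the derived system is `{ω₂, ω₃}` and the system is not completely integrable. -/
theorem stmt11 (ω₁ ω₂ ω₃ : (Fin 5 → ℂ) → ((Fin 5 → ℂ) →L[ℂ] ℂ))
    (hω₁ : ∀ w v, ω₁ w v = v 2 - w 1 * v 0 + w 0 * v 1)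
    (hω₂ : ∀ w v, ω₂ w v = v 3 - (3/2) * w 0 * v 2 + (3/2) * w 2 * v 0
      - w 0 ^ 2 * v 1 + w 0 * w 1 * v 0)
    (hω₃ : ∀ w v, ω₃ w v = v 4 + (3/2) * w 1 * v 2 - (3/2) * w 2 * v 1
      + w 0 * w 1 * v 1 - w 1 ^ 2 * v 0) :
    (∀ X Y : (Fin 5 → ℂ) → (Fin 5 → ℂ), Differentiable ℂ X → Differentiable ℂ Y →
      (∀ w, ω₁ w (X w) = 0 ∧ ω₂ w (X w) = 0 ∧ ω₃ w (X w) = 0) →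
      (∀ w, ω₁ w (Y w) = 0 ∧ ω₂ w (Y w) = 0 ∧ ω₃ w (Y w) = 0) →
      ∀ w, ω₂ w (fderiv ℂ Y w (X w) - fderiv ℂ X w (Y w)) = 0 ∧
           ω₃ w (fderiv ℂ Y w (X w) - fderiv ℂ X w (Y w)) = 0) ∧
    (∃ X Y : (Fin 5 → ℂ) → (Fin 5 → ℂ), Differentiable ℂ X ∧ Differentiable ℂ Y ∧
      (∀ w, ω₁ w (X w) = 0 ∧ ω₂ w (X w) = 0 ∧ ω₃ w (X w) = 0) ∧
      (∀ w, ω₁ w (Y w) = 0 ∧ ω₂ w (Y w) = 0 ∧ ω₃ w (Y w) = 0) ∧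
      ∀ w, ω₁ w (fderiv ℂ Y w (X w) - fderiv ℂ X w (Y w)) ≠ 0) := by
  have ⟨annihilated, nonintegrable⟩ := stmt11_general ω₁ ω₂ ω₃ hω₁ hω₂ hω₃
  exact ⟨fun X Y hX hY hDX hDY w =>
    annihilated X Y w (hX w) (hY w) (.of_forall hDX) (.of_forall hDY), nonintegrable⟩
end
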